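/- arXiv:1512.05966 — 2 statements merged into one kernel-verified Lean document; each statement's English description precedes it below -/
import Mathlib

section
/- Let P₂ := 𝒞(2^ω, [0,1]^{2^{<ω}}) be the Polish space of continuous maps from the Cantor space into [0,1]^{2^{<ω}} with the topology of uniform convergence, and let U₁ := {(h,β) ∈ P₂ × 2^ω : h(β) ∈ 𝓟}. Then: (i) U₁ is a coanalytic subset of P₂ × 2^ω; (ii) the vertical sections {(U₁)_h : h ∈ P₂} are exactly the coanalytic subsets of 2^ω; and (iii) for every coanalytic subset S of ω^ω × 2^ω there is a Borel map b : ω^ω → P₂ such that S_α = (U₁)_{b(α)} for every α ∈ ω^ω. That is, U₁ is uniformly P₂-universal for the coanalytic subsets of 2^ω. -/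
open MeasureTheory Filter Topology
open scoped ENNReal

/-- The basic cylinder `N_s` determined by a finite binary sequence `s`:
the set of all `β ∈ 2^ω` extending `s`. -/
def cyl (s : List Bool) : Set (ℕ → Bool) :=
  {β | ∀ i : Fin s.length, β i = s.get i}

/-- The initial segment `β↾l` of `β ∈ 2^ω`, as a finite binary sequence. -/
def seg (β : ℕ → Bool) (l : ℕ) : List Bool := List.ofFn (fun i : Fin l => β i)

/-- A martingale: a `[0,1]`-valued function on finite binary sequences with
`f(s) = (f(s⌢0) + f(s⌢1))/2`. -/
def IsMartingale (f : List Bool → ℝ) : Prop :=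
  (∀ s, f s ∈ Set.Icc (0:ℝ) 1) ∧
  ∀ s, f s = (f (s ++ [false]) + f (s ++ [true])) / 2

/-- The oscillation `osc(f,β) = inf_N sup_{p,q ≥ N} |f(β↾p) − f(β↾q)|`. -/
noncomputable def osc (f : List Bool → ℝ) (β : ℕ → Bool) : ℝ :=
  ⨅ N : ℕ, ⨆ p : {n : ℕ // N ≤ n}, ⨆ q : {n : ℕ // N ≤ n},
    |f (seg β p.1) - f (seg β q.1)|

/-- The set of divergence `D(f) = {β : osc(f,β) > 0}`. -/
def divSet (f : List Bool → ℝ) : Set (ℕ → Bool) := {β | 0 < osc f β}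

/-- `M` has density 1 at `β`: `λ(M ∩ N_{β↾l}) / λ(N_{β↾l}) → 1`. -/
def densityOne (μ : Measure (ℕ → Bool)) (M : Set (ℕ → Bool)) (β : ℕ → Bool) : Prop :=
  Tendsto (fun l : ℕ => μ (M ∩ cyl (seg β l)) / μ (cyl (seg β l))) atTop (𝓝 1)

/-- A set is `Σ⁰₃` iff it is a countable union of `Gδ` sets. -/
def IsSigma03 {X : Type*} [TopologicalSpace X] (S : Set X) : Prop :=
  ∃ g : ℕ → Set X, (∀ n, IsGδ (g n)) ∧ S = ⋃ n, g n

/-- A set is coanalytic (`Π¹₁`) iff its complement is analytic. -/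
def IsCoanalytic {X : Type*} [TopologicalSpace X] (S : Set X) : Prop :=
  MeasureTheory.AnalyticSet Sᶜ

/-- The associated (partial) function of a martingale: `ψ(f)(β) = lim_l f(β↾l)`
(a junk value if the limit does not exist). -/
noncomputable def psi (f : List Bool → ℝ) (β : ℕ → Bool) : ℝ :=
  limUnder atTop (fun l => f (seg β l))

/-- The Polish space `P₂ = 𝒞(2^ω, [0,1]^{2^{<ω}})` with the topology of
uniform convergence (= compact-open topology). -/
abbrev Ptwo := C((ℕ → Bool), (List Bool → ℝ))

/-- The set `𝓟` of everywhere converging martingales, inside `[0,1]^{2^{<ω}}`. -/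
def Pconv : Set (List Bool → ℝ) :=
  {f | IsMartingale f ∧ ∀ β : ℕ → Bool, osc f β = 0}

/-- `U₁ = {(h,β) ∈ P₂ × 2^ω : h(β) ∈ 𝓟}`. -/
def Uone : Set (Ptwo × (ℕ → Bool)) := {p | p.1 p.2 ∈ Pconv}

instance polishBool : PolishSpace Bool where
  toSecondCountableTopology := inferInstance
  toIsCompletelyMetrizableSpace := inferInstance

instance polishPtwo : PolishSpace Ptwo := by
  infer_instance

theorem osc_zero_iff {f : List Bool → ℝ} (hf : ∀ s, f s ∈ Set.Icc (0:ℝ) 1) (β : ℕ → Bool) :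
    osc f β = 0 ↔ ∀ k : ℕ, ∃ N : ℕ, ∀ p q : ℕ, N ≤ p → N ≤ q →
      |f (seg β p) - f (seg β q)| ≤ 1 / ((k : ℝ) + 1) := by
  have hb : ∀ p q : ℕ, |f (seg β p) - f (seg β q)| ≤ 1 := by
    intro p q
    have h1 := hf (seg β p)
    have h2 := hf (seg β q)
    rw [Set.mem_Icc] at h1 h2
    rw [abs_le]; constructor <;> linarith [h1.1, h1.2, h2.1, h2.2]
  have hne : ∀ N : ℕ, Nonempty {n : ℕ // N ≤ n} := fun N => ⟨⟨N, le_rfl⟩⟩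
  have hin : ∀ N (p : {n : ℕ // N ≤ n}),
      BddAbove (Set.range fun q : {n : ℕ // N ≤ n} => |f (seg β p.1) - f (seg β q.1)|) := by
    intro N p
    exact ⟨1, by rintro _ ⟨q, rfl⟩; exact hb _ _⟩
  have hout : ∀ N, BddAbove (Set.range fun p : {n : ℕ // N ≤ n} =>
      ⨆ q : {n : ℕ // N ≤ n}, |f (seg β p.1) - f (seg β q.1)|) := by
    intro N
    refine ⟨1, ?_⟩
    rintro _ ⟨p, rfl⟩
    have := hne N
    exact ciSup_le fun q => hb _ _
  set g : ℕ → ℝ := fun N => ⨆ p : {n : ℕ // N ≤ n}, ⨆ q : {n : ℕ // N ≤ n},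
    |f (seg β p.1) - f (seg β q.1)| with hg
  have hosc : osc f β = ⨅ N, g N := rfl
  have hle : ∀ N p q, N ≤ p → N ≤ q → |f (seg β p) - f (seg β q)| ≤ g N := by
    intro N p q hp hq
    exact (le_ciSup (hin N ⟨p, hp⟩) ⟨q, hq⟩).trans (le_ciSup (hout N) ⟨p, hp⟩)
  have hg0 : ∀ N, 0 ≤ g N := fun N => (abs_nonneg _).trans (hle N N N le_rfl le_rfl)
  have hgb : BddBelow (Set.range g) := ⟨0, by rintro _ ⟨N, rfl⟩; exact hg0 N⟩
  rw [hosc]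
  constructor
  · intro h k
    have hpos : (0:ℝ) < 1 / ((k:ℝ) + 1) := by positivity
    have : ⨅ N, g N < 1 / ((k:ℝ) + 1) := by rw [h]; exact hpos
    obtain ⟨N, hN⟩ := exists_lt_of_ciInf_lt this
    exact ⟨N, fun p q hp hq => (hle N p q hp hq).trans hN.le⟩
  · intro h
    apply le_antisymm
    · refine le_of_forall_pos_le_add fun ε hε => ?_
      obtain ⟨k, hk⟩ := exists_nat_one_div_lt hε
      obtain ⟨N, hN⟩ := h k
      have := hne N
      have h1 : g N ≤ 1 / ((k:ℝ) + 1) :=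
        ciSup_le fun p => ciSup_le fun q => hN p.1 q.1 p.2 q.2
      have := ciInf_le hgb N
      linarith
    · exact le_ciInf hg0

theorem continuous_seg_eval (p : ℕ) :
    Continuous (fun x : (List Bool → ℝ) × (ℕ → Bool) => x.1 (seg x.2 p)) := by
  have hs : ∀ x : (List Bool → ℝ) × (ℕ → Bool), ∀ᶠ y in 𝓝 x, seg y.2 p = seg x.2 p := by
    intro x
    have : ∀ i : Fin p, ∀ᶠ y : (List Bool → ℝ) × (ℕ → Bool) in 𝓝 x, y.2 i = x.2 i := by
      intro i
      have hc : Continuous fun y : (List Bool → ℝ) × (ℕ → Bool) => y.2 i := by fun_prop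
      exact hc.continuousAt.eventually (by simp : ∀ᶠ z in 𝓝 (x.2 i), z = x.2 i)
    filter_upwards [eventually_all.2 this] with y hy
    unfold seg
    congr 1
    funext i
    exact hy i
  rw [continuous_iff_continuousAt]
  intro x
  have hc : ContinuousAt (fun y : (List Bool → ℝ) × (ℕ → Bool) => y.1 (seg x.2 p)) x := by
    fun_prop
  refine hc.congr ?_
  filter_upwards [hs x] with y hy
  rw [hy]

theorem analytic_Pconv_compl : AnalyticSet Pconvᶜ := by
  have hM : IsClosed {f : List Bool → ℝ | IsMartingale f} := by
    unfold IsMartingale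
    simp only [Set.ofPred_and, Set.ofPred_forall]
    refine IsClosed.inter (isClosed_iInter fun s => ?_) (isClosed_iInter fun s => ?_)
    · exact isClosed_Icc.preimage (continuous_apply s)
    · exact isClosed_eq (by fun_prop) (by fun_prop)
  let B : Set ((List Bool → ℝ) × (ℕ → Bool)) :=
    {x | ∃ k : ℕ, ∀ N : ℕ, ∃ p q : ℕ, N ≤ p ∧ N ≤ q ∧
      1 / ((k : ℝ) + 1) < |x.1 (seg x.2 p) - x.1 (seg x.2 q)|}
  have hB : AnalyticSet B := by
    have : B = ⋃ k : ℕ, ⋂ N : ℕ, {x | ∃ p q : ℕ, N ≤ p ∧ N ≤ q ∧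
      1 / ((k : ℝ) + 1) < |x.1 (seg x.2 p) - x.1 (seg x.2 q)|} := by
      ext x; simp [B]
    rw [this]
    refine AnalyticSet.iUnion fun k => AnalyticSet.iInter fun N => ?_
    have ho : IsOpen {x : (List Bool → ℝ) × (ℕ → Bool) | ∃ p q : ℕ, N ≤ p ∧ N ≤ q ∧
      1 / ((k : ℝ) + 1) < |x.1 (seg x.2 p) - x.1 (seg x.2 q)|} := by
      simp only [Set.ofPred_exists, Set.ofPred_and]
      refine isOpen_iUnion fun p => isOpen_iUnion fun q => ?_
      refine IsOpen.inter isOpen_const (IsOpen.inter isOpen_const ?_)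
      exact isOpen_lt continuous_const
        ((continuous_seg_eval p).sub (continuous_seg_eval q)).abs
    simpa using IsOpen.analyticSet_image ho continuous_id
  have hP : Pconvᶜ = {f : List Bool → ℝ | IsMartingale f}ᶜ ∪ Prod.fst '' B := by
    ext f
    by_cases hf : IsMartingale f
    · simp only [Pconv, Set.mem_compl_iff, Set.mem_ofPred_eq, hf, true_and, Set.mem_union,
        not_true_eq_false, false_or, Set.mem_image, Prod.exists, exists_and_right,
        exists_eq_right, B]
      simp only [osc_zero_iff hf.1]
      push Not
      rfl
    · simp [Pconv, hf]
  rw [hP, Set.union_eq_iUnion]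
  refine AnalyticSet.iUnion fun b => ?_
  cases b
  · exact hB.image_of_continuous continuous_fst
  · simpa using IsOpen.analyticSet_image hM.isOpen_compl continuous_id

/-- States of the automaton. -/
inductive St : Type
  | dead (c b : Bool)
  | alive (b : Bool) (t : List ℕ) (n : ℕ)
  | toggle (b : Bool) (t : List ℕ)

namespace St

/-- One step of the automaton. -/
def step (P : List ℕ → Bool) : St → Bool → St
  | dead c b, _ => dead c b
  | alive b t n, false => alive b t (n + 1)
  | alive b t n, true => if P (t ++ [n]) then toggle b (t ++ [n]) else dead false b
  | toggle b t, false => alive (!b) t 0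
  | toggle b _, true => dead true b

/-- The value of the martingale at a state. -/
noncomputable def val : St → ℝ
  | dead true b => if b then 1 else 0
  | dead false b => if b then 2/3 else 1/3
  | alive b _ _ => if b then 2/3 else 1/3
  | toggle b _ => if b then 2/3 else 1/3

/-- The initial state. -/
def startState : St := alive false [] 0

/-- The state after reading a word. -/
def run (P : List ℕ → Bool) (s : List Bool) : St := s.foldl (step P) startState

/-- The list read so far. -/
def lst : St → List ℕ
  | dead _ _ => []
  | alive _ t _ => t
  | toggle _ t => t

/-- Dead states. -/
def isDead : St → Prop
  | dead _ _ => True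
  | _ => False

/-- Toggle states. -/
def isToggle : St → Prop
  | toggle _ _ => True
  | _ => False

/-- Potential. -/
def pot : St → ℕ
  | dead _ _ => 0
  | alive _ t _ => 2 * t.length + 1
  | toggle _ t => 2 * t.length

theorem val_mem (σ : St) : σ.val ∈ Set.Icc (0:ℝ) 1 := by
  rcases σ with ⟨_ | _, _ | _⟩ | ⟨_ | _, t, n⟩ | ⟨_ | _, t⟩ <;> norm_num [val]

theorem val_step (P : List ℕ → Bool) (σ : St) :
    σ.val = ((step P σ false).val + (step P σ true).val) / 2 := by
  rcases σ with ⟨_ | _, _ | _⟩ | ⟨_ | _, t, n⟩ | ⟨_ | _, t⟩ <;> norm_num [val, step] <;>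
    split_ifs <;> norm_num [val]

theorem run_append (P : List ℕ → Bool) (s : List Bool) (c : Bool) :
    run P (s ++ [c]) = step P (run P s) c := by
  simp [run]

theorem martingale (P : List ℕ → Bool) : IsMartingale fun s => (run P s).val := by
  refine ⟨fun s => val_mem _, fun s => ?_⟩
  simp only [run_append]
  exact val_step P _

theorem seg_succ (β : ℕ → Bool) (n : ℕ) : seg β (n + 1) = seg β n ++ [β n] := by
  unfold seg
  apply List.ext_getElem
  · simp
  · intro i h1 h2
    simp only [List.length_ofFn] at h1
    rcases Nat.lt_or_ge i n with h | h
    · rw [List.getElem_append_left (by simpa using h)]; simp only [List.getElem_ofFn]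
    · obtain rfl : i = n := by omega
      rw [List.getElem_append_right (by simp)]; simp only [List.getElem_ofFn, List.getElem_singleton]

theorem run_seg_succ (P : List ℕ → Bool) (β : ℕ → Bool) (n : ℕ) :
    run P (seg β (n + 1)) = step P (run P (seg β n)) (β n) := by
  rw [seg_succ, run_append]

theorem val_step_eq (P : List ℕ → Bool) (σ : St) (c : Bool) (h : ¬ σ.isToggle) :
    (step P σ c).val = σ.val := by
  rcases σ with ⟨d, b⟩ | ⟨b, t, n⟩ | ⟨b, t⟩
  · rfl
  · cases c
    · rfl
    · simp only [step]; split_ifs <;> rfl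
  · exact absurd trivial h

theorem dead_step (P : List ℕ → Bool) (σ : St) (c : Bool) (h : σ.isDead) :
    step P σ c = σ := by
  rcases σ with ⟨d, b⟩ | ⟨b, t, n⟩ | ⟨b, t⟩
  · rfl
  · exact h.elim
  · exact h.elim

theorem lst_step (P : List ℕ → Bool) (σ : St) (c : Bool) (h : ¬ (step P σ c).isDead) :
    σ.lst <+: (step P σ c).lst ∧ σ.pot ≤ (step P σ c).pot ∧
    (σ.isToggle → σ.pot < (step P σ c).pot) ∧
    ((∀ m, m + 1 ≤ σ.lst.length → P (σ.lst.take (m + 1)) = true) →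
      ∀ m, m + 1 ≤ (step P σ c).lst.length → P ((step P σ c).lst.take (m + 1)) = true) := by
  rcases σ with ⟨d, b⟩ | ⟨b, t, n⟩ | ⟨b, t⟩
  · exact absurd trivial h
  · cases c
    · simp [step, lst, pot, isToggle]
    · by_cases hP : P (t ++ [n]) = true
      · simp only [step, hP, if_true, lst, pot, isToggle]
        refine ⟨List.prefix_append _ _, by simp only [List.length_append, List.length_singleton]; omega, fun h => h.elim, ?_⟩
        intro hm m hle
        rcases Nat.lt_or_ge m t.length with h1 | h1
        · rw [List.take_append_of_le_length (by omega)]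
          exact hm m h1
        · rw [List.take_of_length_le (by simp; omega)]
          exact hP
      · simp [step, hP, isDead] at h
  · cases c
    · simp [step, lst, pot, isToggle]
    · simp [step, isDead] at h

theorem converges (P : List ℕ → Bool) (β : ℕ → Bool)
    (hP : ¬ ∃ γ : ℕ → ℕ, ∀ m, P (List.ofFn fun i : Fin (m + 1) => γ i) = true) :
    ∃ N, ∀ n, N ≤ n → (run P (seg β n)).val = (run P (seg β N)).val := by
  by_contra hcon
  push Not at hcon
  set σ : ℕ → St := fun n => run P (seg β n) with hσ
  have hs : ∀ n, σ (n + 1) = step P (σ n) (β n) := fun n => run_seg_succ P β n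
  have hnd : ∀ n, ¬ (σ n).isDead := by
    intro N hd
    obtain ⟨n, hn, hne⟩ := hcon N
    apply hne
    have : σ n = σ N := by
      clear hne
      induction n, hn using Nat.le_induction with
      | base => rfl
      | succ n hn ih => rw [hs, dead_step _ _ _ (ih ▸ hd), ih]
    exact congrArg val this
  have htog : ∀ N, ∃ n, N ≤ n ∧ (σ n).isToggle := by
    intro N
    by_contra hno
    push Not at hno
    obtain ⟨n, hn, hne⟩ := hcon N
    apply hne
    clear hne
    show (σ n).val = (σ N).val
    induction n, hn using Nat.le_induction with
    | base => rfl
    | succ n hn ih => rw [hs, val_step_eq _ _ _ (hno n hn), ih]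
  have hst := fun n => lst_step P (σ n) (β n) (by rw [← hs]; exact hnd (n + 1))
  simp only [← hs] at hst
  have hpm : Monotone fun n => (σ n).pot := monotone_nat_of_le_succ fun n => (hst n).2.1
  have hpu : ∀ k, ∃ n, k ≤ (σ n).pot := by
    intro k
    induction k with
    | zero => exact ⟨0, Nat.zero_le _⟩
    | succ k ih =>
      obtain ⟨n, hn⟩ := ih
      obtain ⟨m, hm, ht⟩ := htog n
      exact ⟨m + 1, by have := (hst m).2.2.1 ht; have := hpm hm; simp only at this; omega⟩
  have hlu : ∀ k, ∃ n, k < (σ n).lst.length := by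
    intro k
    obtain ⟨n, hn⟩ := hpu (2 * k + 2)
    refine ⟨n, ?_⟩
    have h := hnd n
    generalize σ n = τ at hn h
    rcases τ with ⟨d, b⟩ | ⟨b, t, n⟩ | ⟨b, t⟩
    · exact absurd trivial h
    · simp only [pot, lst] at *; omega
    · simp only [pot, lst] at *; omega
  have hpre : ∀ n m, n ≤ m → (σ n).lst <+: (σ m).lst := by
    intro n m h
    induction m, h using Nat.le_induction with
    | base => exact List.prefix_rfl
    | succ m h ih => exact ih.trans (hst m).1
  have hall : ∀ n m, m + 1 ≤ (σ n).lst.length → P ((σ n).lst.take (m + 1)) = true := by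
    intro n
    induction n with
    | zero => intro m hm; simp [hσ, seg, run, startState, lst] at hm
    | succ n ih => exact (hst n).2.2.2 ih
  choose u hu using hlu
  apply hP
  refine ⟨fun m => (σ (u m)).lst[m]'(hu m), fun m => ?_⟩
  have hkey : ∀ i (hi : i < (σ (u m)).lst.length),
      (σ (u m)).lst[i] = (σ (u i)).lst[i]'(hu i) := by
    intro i hi
    rcases le_total (u m) (u i) with h | h
    · exact (hpre _ _ h).getElem hi
    · exact ((hpre _ _ h).getElem (hu i)).symm
  have : (List.ofFn fun i : Fin (m + 1) => (σ (u i)).lst[(i : ℕ)]'(hu i)) =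
      (σ (u m)).lst.take (m + 1) := by
    apply List.ext_getElem
    · simp; have := hu m; omega
    · intro i h1 h2
      simp only [List.getElem_ofFn, List.getElem_take]
      rw [hkey]
  rw [this]
  exact hall _ _ (hu m)

/-- The bit played in order to follow `γ`. -/
def bit (γ : ℕ → ℕ) : St → Bool
  | alive _ t n => decide (n = γ t.length)
  | _ => false

/-- The sequence of states which follows `γ`. -/
def follow (P : List ℕ → Bool) (γ : ℕ → ℕ) : ℕ → St
  | 0 => startState
  | n + 1 => step P (follow P γ n) (bit γ (follow P γ n))

theorem run_follow (P : List ℕ → Bool) (γ : ℕ → ℕ) (n : ℕ) :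
    run P (seg (fun k => bit γ (follow P γ k)) n) = follow P γ n := by
  induction n with
  | zero => simp [seg, run, follow]
  | succ n ih => rw [run_seg_succ, ih, follow]

theorem ofFn_snoc (γ : ℕ → ℕ) (m : ℕ) : (List.ofFn fun i : Fin (m + 1) => γ i) =
    (List.ofFn fun i : Fin m => γ i) ++ [γ m] := by
  apply List.ext_getElem
  · simp
  · intro i h1 h2
    simp only [List.length_ofFn] at h1
    rcases Nat.lt_or_ge i m with h | h
    · rw [List.getElem_append_left (by simpa using h)]; simp only [List.getElem_ofFn]
    · obtain rfl : i = m := by omega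
      rw [List.getElem_append_right (by simp)]; simp only [List.getElem_ofFn, List.getElem_singleton]

theorem follow_inv (P : List ℕ → Bool) (γ : ℕ → ℕ)
    (hP : ∀ m, P (List.ofFn fun i : Fin (m + 1) => γ i) = true) (n : ℕ) :
    (∃ b m k, k ≤ γ m ∧ follow P γ n = alive b (List.ofFn fun i : Fin m => γ i) k) ∨
    (∃ b m, follow P γ n = toggle b (List.ofFn fun i : Fin m => γ i)) := by
  induction n with
  | zero => exact Or.inl ⟨false, 0, 0, Nat.zero_le _, by simp [follow, startState]⟩
  | succ n ih =>
    rcases ih with ⟨b, m, k, hk, h⟩ | ⟨b, m, h⟩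
    · by_cases hkm : k = γ m
      · right
        refine ⟨b, m + 1, ?_⟩
        rw [follow, h, ofFn_snoc]
        have := hP m
        rw [ofFn_snoc] at this
        simp [bit, hkm, step, this]
      · left
        refine ⟨b, m, k + 1, by omega, ?_⟩
        rw [follow, h]
        simp [bit, hkm, step]
    · left
      refine ⟨!b, m, 0, Nat.zero_le _, ?_⟩
      rw [follow, h]
      simp [bit, step]

theorem follow_toggle (P : List ℕ → Bool) (γ : ℕ → ℕ)
    (hP : ∀ m, P (List.ofFn fun i : Fin (m + 1) => γ i) = true) (N : ℕ) :
    ∃ n, N ≤ n ∧ ∃ b m, follow P γ n = toggle b (List.ofFn fun i : Fin m => γ i) := by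
  have aux : ∀ d N b m k, k + d = γ m →
      follow P γ N = alive b (List.ofFn fun i : Fin m => γ i) k →
      ∃ n, N ≤ n ∧ ∃ b m, follow P γ n = toggle b (List.ofFn fun i : Fin m => γ i) := by
    intro d
    induction d with
    | zero =>
      intro N b m k hk h
      refine ⟨N + 1, by omega, b, m + 1, ?_⟩
      rw [follow, h, ofFn_snoc]
      have := hP m
      rw [ofFn_snoc] at this
      have hk' : k = γ m := by omega
      simp [bit, hk', step, this]
    | succ d ih =>
      intro N b m k hk h
      obtain ⟨n, hn, h'⟩ := ih (N + 1) b m (k + 1) (by omega) (by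
        have hk' : k ≠ γ m := by omega
        rw [follow, h]
        simp [bit, hk', step])
      exact ⟨n, by omega, h'⟩
  rcases follow_inv P γ hP N with ⟨b, m, k, hk, h⟩ | ⟨b, m, h⟩
  · exact aux (γ m - k) N b m k (by omega) h
  · exact ⟨N, le_rfl, b, m, h⟩

theorem mem_Pconv_iff (P : List ℕ → Bool) :
    (fun s => (run P s).val) ∈ Pconv ↔
      ¬ ∃ γ : ℕ → ℕ, ∀ m, P (List.ofFn fun i : Fin (m + 1) => γ i) = true := by
  have hM := martingale P
  constructor
  · rintro ⟨-, h⟩ ⟨γ, hγ⟩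
    have h1 := (osc_zero_iff hM.1 _).1 (h (fun k => bit γ (follow P γ k))) 5
    obtain ⟨N, hN⟩ := h1
    obtain ⟨n, hn, b, m, hb⟩ := follow_toggle P γ hγ N
    have h2 := hN n (n + 1) hn (by omega)
    simp only [run_follow] at h2
    rw [follow, hb] at h2
    cases b <;> norm_num [bit, step, val, abs_le] at h2
  · intro h
    refine ⟨hM, fun β => (osc_zero_iff hM.1 _).2 fun k => ?_⟩
    obtain ⟨N, hN⟩ := converges P β h
    refine ⟨N, fun p q hp hq => ?_⟩
    simp only [hN p hp, hN q hq, sub_self, abs_zero]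
    positivity

theorem run_eventually {X : Type*} [TopologicalSpace X] (P : X → List ℕ → Bool)
    (hP : ∀ t x, ∀ᶠ y in 𝓝 x, P y t = P x t) (s : List Bool) (x : X) :
    ∀ᶠ y in 𝓝 x, run (P y) s = run (P x) s := by
  induction s using List.reverseRecOn with
  | nil => exact Eventually.of_forall fun _ => rfl
  | append_singleton s c ih =>
    simp only [run_append]
    generalize run (P x) s = σ at ih
    rcases σ with ⟨d, b⟩ | ⟨b, t, n⟩ | ⟨b, t⟩
    · filter_upwards [ih] with y hy
      rw [hy]; rfl
    · filter_upwards [ih, hP (t ++ [n]) x] with y hy hy2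
      rw [hy]
      cases c
      · rfl
      · simp only [step, hy2]
    · filter_upwards [ih] with y hy
      rw [hy]; cases c <;> rfl

end St

theorem exists_scheme (S : Set ((ℕ → ℕ) × (ℕ → Bool))) (hS : AnalyticSet S) :
    ∃ P : (ℕ → ℕ) × (ℕ → Bool) → List ℕ → Bool,
      (∀ t x, ∀ᶠ y in 𝓝 x, P y t = P x t) ∧
      ∀ x, x ∈ S ↔ ∃ γ : ℕ → ℕ, ∀ m, P x (List.ofFn fun i : Fin (m + 1) => γ i) = true := by
  classical
  rw [AnalyticSet] at hS
  rcases hS with rfl | ⟨g, hg, rfl⟩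
  · exact ⟨fun _ _ => false, fun _ _ => Eventually.of_forall fun _ => rfl, by simp⟩
  refine ⟨fun x t => decide (∃ γ : ℕ → ℕ, (List.ofFn fun i : Fin t.length => γ i) = t ∧
    ∀ i < t.length, (g γ).1 i = x.1 i ∧ (g γ).2 i = x.2 i), ?_, ?_⟩
  · intro t x
    have h1 : ∀ i : Fin t.length, ∀ᶠ y : (ℕ → ℕ) × (ℕ → Bool) in 𝓝 x,
        y.1 i = x.1 i ∧ y.2 i = x.2 i := by
      intro i
      have hc : Continuous fun y : (ℕ → ℕ) × (ℕ → Bool) => y.1 i := by fun_prop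
      have hc2 : Continuous fun y : (ℕ → ℕ) × (ℕ → Bool) => y.2 i := by fun_prop
      exact (hc.continuousAt.eventually (by simp : ∀ᶠ z in 𝓝 (x.1 i), z = x.1 i)).and
        (hc2.continuousAt.eventually (by simp : ∀ᶠ z in 𝓝 (x.2 i), z = x.2 i))
    filter_upwards [eventually_all.2 h1] with y hy
    congr 1
    refine propext (exists_congr fun γ => and_congr_right fun _ => forall_congr' fun i =>
      forall_congr' fun hi => ?_)
    have := hy ⟨i, hi⟩
    simp only at this
    rw [this.1, this.2]
  · intro x
    simp only [decide_eq_true_eq]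
    constructor
    · rintro ⟨γ, rfl⟩
      refine ⟨γ, fun m => ⟨γ, ?_, fun i _ => ⟨rfl, rfl⟩⟩⟩
      apply List.ext_getElem <;> simp
    · rintro ⟨γ, hγ⟩
      choose δ hδ1 hδ2 using hγ
      have hδ : Tendsto δ atTop (𝓝 γ) := by
        rw [tendsto_pi_nhds]
        intro i
        refine tendsto_const_nhds.congr' ?_
        filter_upwards [eventually_ge_atTop i] with m hm
        have h := hδ1 m
        have h2 : (List.ofFn fun k : Fin (m + 1) => γ k)[i]? = some (γ i) := by
          rw [List.getElem?_ofFn, dif_pos (by omega)]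
        rw [← h, List.getElem?_ofFn, dif_pos (by simp; omega)] at h2
        exact (Option.some.inj h2).symm
      have h1 : Tendsto (fun m => g (δ m)) atTop (𝓝 (g γ)) := (hg.tendsto γ).comp hδ
      have h2 : Tendsto (fun m => g (δ m)) atTop (𝓝 x) := by
        rw [Prod.tendsto_iff]
        constructor <;>
        · rw [tendsto_pi_nhds]
          intro i
          refine tendsto_const_nhds.congr' ?_
          filter_upwards [eventually_ge_atTop i] with m hm
          have := hδ2 m i (by simp; omega)
          first | exact this.1.symm | exact this.2.symm
      exact ⟨γ, tendsto_nhds_unique h1 h2⟩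

theorem universal_aux (S : Set ((ℕ → ℕ) × (ℕ → Bool))) (hS : IsCoanalytic S) :
    ∃ b : (ℕ → ℕ) → Ptwo, Continuous b ∧
        ∀ α : ℕ → ℕ, {β : ℕ → Bool | (b α, β) ∈ Uone} = {β | (α, β) ∈ S} := by
  obtain ⟨P, hP, hPS⟩ := exists_scheme Sᶜ hS
  have hF : Continuous fun x : (ℕ → ℕ) × (ℕ → Bool) =>
      (fun s => (St.run (P x) s).val : List Bool → ℝ) := by
    refine continuous_pi fun s => ?_
    rw [continuous_iff_continuousAt]
    intro x
    refine (continuousAt_const (y := (St.run (P x) s).val)).congr ?_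
    filter_upwards [St.run_eventually P hP s x] with y hy
    rw [hy]
  let F : C((ℕ → ℕ) × (ℕ → Bool), List Bool → ℝ) := ⟨_, hF⟩
  refine ⟨F.curry, F.curry.continuous, fun α => ?_⟩
  ext β
  show (fun s => (St.run (P (α, β)) s).val : List Bool → ℝ) ∈ Pconv ↔ (α, β) ∈ S
  rw [St.mem_Pconv_iff, ← hPS]
  simp

/-- `U₁` is coanalytic, its vertical sections are exactly the
coanalytic subsets of `2^ω`, and it is uniformly universal: every coanalytic
`S ⊆ ω^ω × 2^ω` is parametrized by a Borel map `b : ω^ω → P₂`. -/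
theorem Uone_uniformly_universal :
    IsCoanalytic Uone ∧
    (∀ h : Ptwo, IsCoanalytic {β : ℕ → Bool | (h, β) ∈ Uone}) ∧
    (∀ A : Set (ℕ → Bool), IsCoanalytic A →
      ∃ h : Ptwo, {β : ℕ → Bool | (h, β) ∈ Uone} = A) ∧
    (∀ S : Set ((ℕ → ℕ) × (ℕ → Bool)), IsCoanalytic S →
      ∃ b : (ℕ → ℕ) → Ptwo,
        (letI : MeasurableSpace Ptwo := borel Ptwo; Measurable b) ∧
        ∀ α : ℕ → ℕ, {β : ℕ → Bool | (b α, β) ∈ Uone} = {β | (α, β) ∈ S}) := by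
  refine ⟨?_, ?_, ?_, ?_⟩
  · have hev : Continuous fun p : Ptwo × (ℕ → Bool) => p.1 p.2 := by fun_prop
    exact analytic_Pconv_compl.preimage hev
  · intro h
    exact analytic_Pconv_compl.preimage h.continuous
  · intro A hA
    obtain ⟨b, -, hb⟩ := universal_aux {x | x.2 ∈ A}
      (AnalyticSet.preimage hA continuous_snd)
    exact ⟨b 0, hb 0⟩
  · intro S hS
    obtain ⟨b, hbc, hb⟩ := universal_aux S hS
    refine ⟨b, ?_, hb⟩
    letI : MeasurableSpace Ptwo := borel Ptwo
    haveI : BorelSpace Ptwo := ⟨rfl⟩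
    exact hbc.measurable
end

section
/- Let P₂ := 𝒞(2^ω, [0,1]^{2^{<ω}}) with the topology of uniform convergence, and let C₂ := {h ∈ P₂ : h(β) ∉ 𝓟 for every β ∈ 2^ω}. Then C₂ is Π¹₂-complete: (i) the complement of C₂ in P₂ equals the projection to P₂ of the coanalytic set {(h,β) ∈ P₂ × 2^ω : h(β) ∈ 𝓟}, so C₂ is a Π¹₂ set; and (ii) for every subset A of 2^ω whose complement is the projection to 2^ω of some coanalytic subset of 2^ω × ω^ω (i.e., every Π¹₂ subset A of 2^ω), there is a continuous map g : 2^ω → P₂ with A = g⁻¹(C₂). -/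
open MeasureTheory Filter Topology
open scoped ENNReal

/-- `C₂ = {h ∈ P₂ : h(β) ∉ 𝓟 for all β}`. -/
def Ctwo : Set Ptwo := {h | ∀ β : ℕ → Bool, h β ∉ Pconv}

/-! ### Oscillation and Cauchy sequences -/

theorem seg_succ (β : ℕ → Bool) (n : ℕ) : seg β (n + 1) = seg β n ++ [β n] := by
  unfold seg
  rw [List.ofFn_succ_last]
  simp

theorem seg_length (β : ℕ → Bool) (n : ℕ) : (seg β n).length = n := by
  simp [seg]

theorem seg_getD (β : ℕ → Bool) (n i : ℕ) (h : i < n) : (seg β n).getD i false = β i := by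
  simp [seg, List.getD, h]

theorem osc_eq_zero_iff (f : List Bool → ℝ) (hf : ∀ s, f s ∈ Set.Icc (0:ℝ) 1) (β : ℕ → Bool) :
    osc f β = 0 ↔ CauchySeq (fun n => f (seg β n)) := by
  have habs : ∀ p q : ℕ, |f (seg β p) - f (seg β q)| ≤ 1 := by
    intro p q
    have h1 := hf (seg β p)
    have h2 := hf (seg β q)
    rw [abs_le]
    constructor <;> linarith [h1.1, h1.2, h2.1, h2.2]
  have hin : ∀ N : ℕ, ∀ p : {n : ℕ // N ≤ n},
      BddAbove (Set.range fun q : {n : ℕ // N ≤ n} => |f (seg β p.1) - f (seg β q.1)|) := by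
    intro N p
    refine ⟨1, ?_⟩
    rintro _ ⟨q, rfl⟩
    exact habs _ _
  have hne : ∀ N : ℕ, Nonempty {n : ℕ // N ≤ n} := fun N => ⟨⟨N, le_rfl⟩⟩
  have hout : ∀ N : ℕ, BddAbove (Set.range fun p : {n : ℕ // N ≤ n} =>
      ⨆ q : {n : ℕ // N ≤ n}, |f (seg β p.1) - f (seg β q.1)|) := by
    intro N
    refine ⟨1, ?_⟩
    rintro _ ⟨p, rfl⟩
    have := hne N
    exact ciSup_le fun q => habs _ _
  have hle : ∀ N p q : ℕ, N ≤ p → N ≤ q → |f (seg β p) - f (seg β q)| ≤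
      ⨆ p : {n : ℕ // N ≤ n}, ⨆ q : {n : ℕ // N ≤ n}, |f (seg β p.1) - f (seg β q.1)| := by
    intro N p q hp hq
    exact (le_ciSup (hin N ⟨p, hp⟩) ⟨q, hq⟩).trans (le_ciSup (hout N) ⟨p, hp⟩)
  have hnn : ∀ N : ℕ, 0 ≤
      ⨆ p : {n : ℕ // N ≤ n}, ⨆ q : {n : ℕ // N ≤ n}, |f (seg β p.1) - f (seg β q.1)| :=
    fun N => (abs_nonneg _).trans (hle N N N le_rfl le_rfl)
  have hbb : BddBelow (Set.range fun N : ℕ =>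
      ⨆ p : {n : ℕ // N ≤ n}, ⨆ q : {n : ℕ // N ≤ n}, |f (seg β p.1) - f (seg β q.1)|) := by
    refine ⟨0, ?_⟩
    rintro _ ⟨N, rfl⟩
    exact hnn N
  rw [Metric.cauchySeq_iff]
  constructor
  · intro h ε hε
    have : osc f β < ε := by rw [h]; exact hε
    obtain ⟨N, hN⟩ := exists_lt_of_ciInf_lt this
    refine ⟨N, fun m hm n hn => ?_⟩
    rw [Real.dist_eq]
    exact (hle N m n hm hn).trans_lt hN
  · intro h
    apply le_antisymm
    · apply le_of_forall_pos_le_add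
      intro ε hε
      obtain ⟨N, hN⟩ := h ε hε
      refine (ciInf_le hbb N).trans ?_
      have := hne N
      refine ciSup_le fun p => ciSup_le fun q => ?_
      have := hN p.1 p.2 q.1 q.2
      rw [Real.dist_eq] at this
      linarith
    · exact le_ciInf hnn

theorem mem_Pconv_iff (f : List Bool → ℝ) :
    f ∈ Pconv ↔ IsMartingale f ∧ ∀ β : ℕ → Bool, CauchySeq (fun n => f (seg β n)) := by
  unfold Pconv
  constructor
  · rintro ⟨h1, h2⟩
    exact ⟨h1, fun β => (osc_eq_zero_iff f h1.1 β).1 (h2 β)⟩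
  · rintro ⟨h1, h2⟩
    exact ⟨h1, fun β => (osc_eq_zero_iff f h1.1 β).2 (h2 β)⟩

/-! ### Part (i) -/

theorem seg_preimage_clopen (n : ℕ) : Continuous (fun β : ℕ → Bool => (fun i : Fin n => β i)) := by
  fun_prop

theorem measurable_eval_seg (n : ℕ) :
    Measurable (fun q : (List Bool → ℝ) × (ℕ → Bool) => q.1 (seg q.2 n)) := by
  have h : Measurable (fun q : (Fin n → Bool) × (List Bool → ℝ) => q.2 (List.ofFn q.1)) := by
    apply measurable_from_prod_countable_right
    intro t
    exact measurable_pi_apply (X := fun _ : List Bool => ℝ) (List.ofFn t)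
  exact h.comp (((seg_preimage_clopen n).measurable.comp measurable_snd).prodMk measurable_fst)

theorem measurableSet_notCauchy :
    MeasurableSet {q : (List Bool → ℝ) × (ℕ → Bool) | ¬ CauchySeq (fun n => q.1 (seg q.2 n))} := by
  have : {q : (List Bool → ℝ) × (ℕ → Bool) | CauchySeq (fun n => q.1 (seg q.2 n))} =
      ⋂ k : ℕ, ⋃ N : ℕ, ⋂ m : ℕ, ⋂ _ : N ≤ m, ⋂ n : ℕ, ⋂ _ : N ≤ n,
        {q | dist (q.1 (seg q.2 m)) (q.1 (seg q.2 n)) < 1 / ((k:ℝ) + 1)} := by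
    ext q
    simp only [Set.mem_ofPred_eq, Set.mem_iInter, Set.mem_iUnion]
    rw [Metric.cauchySeq_iff]
    constructor
    · intro h k
      exact h _ (by positivity)
    · intro h ε hε
      obtain ⟨k, hk⟩ := exists_nat_one_div_lt hε
      obtain ⟨N, hN⟩ := h k
      exact ⟨N, fun m hm n hn => (hN m hm n hn).trans hk⟩
  have h2 : MeasurableSet
      {q : (List Bool → ℝ) × (ℕ → Bool) | CauchySeq (fun n => q.1 (seg q.2 n))} := by
    rw [this]
    refine MeasurableSet.iInter fun k => MeasurableSet.iUnion fun N => MeasurableSet.iInter fun m =>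
      MeasurableSet.iInter fun _ => MeasurableSet.iInter fun n => MeasurableSet.iInter fun _ => ?_
    exact measurableSet_lt ((measurable_eval_seg m).dist (measurable_eval_seg n)) measurable_const
  exact h2.compl

theorem measurableSet_martingale : MeasurableSet {f : List Bool → ℝ | IsMartingale f} := by
  have : {f : List Bool → ℝ | IsMartingale f} = (⋂ s, {f | f s ∈ Set.Icc (0:ℝ) 1}) ∩
      ⋂ s, {f | f s = (f (s ++ [false]) + f (s ++ [true])) / 2} := by
    ext f
    simp [IsMartingale]
  rw [this]
  refine MeasurableSet.inter (MeasurableSet.iInter fun s => ?_) (MeasurableSet.iInter fun s => ?_)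
  · exact measurable_pi_apply s measurableSet_Icc
  · have h1 : Measurable fun f : List Bool → ℝ => (f (s ++ [false]) + f (s ++ [true])) / 2 := by
      fun_prop
    exact measurableSet_eq_fun (measurable_pi_apply _) h1

theorem analytic_union {X : Type*} [TopologicalSpace X] {s t : Set X} (hs : AnalyticSet s)
    (ht : AnalyticSet t) : AnalyticSet (s ∪ t) := by
  rw [Set.union_eq_iUnion]
  refine AnalyticSet.iUnion fun b => ?_
  cases b <;> assumption

instance polish_cantor : PolishSpace (ℕ → Bool) where
  toSecondCountableTopology := inferInstance
  toIsCompletelyMetrizableSpace := inferInstance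

instance polish_aux : PolishSpace ((List Bool → ℝ) × (ℕ → Bool)) where
  toSecondCountableTopology := inferInstance
  toIsCompletelyMetrizableSpace := inferInstance

instance polish_cantor_sq : PolishSpace ((ℕ → Bool) × (ℕ → Bool)) where
  toSecondCountableTopology := inferInstance
  toIsCompletelyMetrizableSpace := inferInstance

theorem analytic_compl_Pconv : AnalyticSet (Pconvᶜ) := by
  have : Pconvᶜ = {f : List Bool → ℝ | IsMartingale f}ᶜ ∪ Prod.fst ''
      {q : (List Bool → ℝ) × (ℕ → Bool) | ¬ CauchySeq (fun n => q.1 (seg q.2 n))} := by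
    ext f
    simp only [Set.mem_compl_iff, mem_Pconv_iff, Set.mem_union, Set.mem_image, Set.mem_ofPred_eq,
      Prod.exists, exists_and_right, exists_eq_right]
    rw [not_and_or, not_forall]
  rw [this]
  exact analytic_union measurableSet_martingale.compl.analyticSet
    (measurableSet_notCauchy.analyticSet.image_of_continuous continuous_fst)

instance polish_Ptwo : PolishSpace Ptwo where
  toSecondCountableTopology := inferInstance
  toIsCompletelyMetrizableSpace := inferInstance

instance polish_Ptwo_prod : PolishSpace (Ptwo × (ℕ → Bool)) where
  toSecondCountableTopology := inferInstance
  toIsCompletelyMetrizableSpace := inferInstance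

theorem coanalytic_part : IsCoanalytic {p : Ptwo × (ℕ → Bool) | p.1 p.2 ∈ Pconv} := by
  unfold IsCoanalytic
  have hc : Continuous (fun p : Ptwo × (ℕ → Bool) => p.1 p.2) := by fun_prop
  exact analytic_compl_Pconv.preimage hc

/-! ### The betting martingale -/

/-- One step: bet on `true` if `Q` holds. -/
noncomputable def stepV (Q : Prop) (v : ℝ) (b : Bool) : ℝ :=
  open Classical in
  if Q ∧ v = 1 / 3 then (if b then 2 / 3 else 0)
  else if Q ∧ v = 2 / 3 then (if b then 1 / 3 else 1) else v

/-- Betting process on reversed lists. -/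
noncomputable def betW (Q : List Bool → Prop) : List Bool → ℝ
  | [] => 1 / 3
  | b :: t => stepV (Q t.reverse) (betW Q t) b

/-- Betting martingale. -/
noncomputable def betV (Q : List Bool → Prop) (s : List Bool) : ℝ := betW Q s.reverse

theorem betV_nil (Q : List Bool → Prop) : betV Q [] = 1 / 3 := rfl

theorem betV_concat (Q : List Bool → Prop) (s : List Bool) (b : Bool) :
    betV Q (s ++ [b]) = stepV (Q s) (betV Q s) b := by
  simp [betV, betW]

theorem stepV_mem (Q : Prop) (v : ℝ) (b : Bool) (hv : v ∈ Set.Icc (0:ℝ) 1) :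
    stepV Q v b ∈ Set.Icc (0:ℝ) 1 := by
  unfold stepV
  split_ifs <;> first | exact hv | norm_num

theorem betV_martingale (Q : List Bool → Prop) : IsMartingale (betV Q) := by
  constructor
  · intro s
    induction s using List.reverseRecOn with
    | nil => rw [betV_nil]; norm_num
    | append_singleton s b ih => rw [betV_concat]; exact stepV_mem _ _ _ ih
  · intro s
    rw [betV_concat, betV_concat]
    unfold stepV
    split_ifs with h1 h2 <;> simp_all <;> norm_num

theorem betV_mem_Pconv_iff (Q : List Bool → Prop) :
    betV Q ∈ Pconv ↔ ¬ ∃ p : ℕ → Bool, (∀ N, ∃ n ≥ N, Q (seg p n)) ∧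
      ∀ n, Q (seg p n) → p n = true := by
  rw [mem_Pconv_iff]
  constructor
  · rintro ⟨-, h⟩ ⟨p, hinf, hwin⟩
    have hv : ∀ n, betV Q (seg p n) = 1 / 3 ∨ betV Q (seg p n) = 2 / 3 := by
      intro n
      induction n with
      | zero => left; exact betV_nil Q
      | succ n ih =>
        rw [seg_succ, betV_concat]
        by_cases hQ : Q (seg p n)
        · rw [hwin n hQ]
          rcases ih with ih | ih <;> rw [ih] <;> norm_num [stepV, hQ]
        · simpa [stepV, hQ] using ih
    obtain ⟨N, hN⟩ := Metric.cauchySeq_iff.1 (h p) (1 / 3) (by norm_num)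
    obtain ⟨n, hn, hQ⟩ := hinf N
    have h1 := hN n hn (n + 1) (by omega)
    rw [Real.dist_eq, seg_succ, betV_concat, hwin n hQ] at h1
    rcases hv n with ih | ih <;> rw [ih] at h1 <;> norm_num [stepV, hQ, abs_lt] at h1
  · intro h
    refine ⟨betV_martingale Q, fun p => ?_⟩
    have hev : ∃ N, ∀ n ≥ N, betV Q (seg p (n + 1)) = betV Q (seg p n) := by
      by_cases h1 : ∀ N, ∃ n ≥ N, Q (seg p n)
      · have h2 : ¬ ∀ n, Q (seg p n) → p n = true := fun h2 => h ⟨p, h1, h2⟩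
        push Not at h2
        obtain ⟨n, hQ, hpn⟩ := h2
        have hpn : p n = false := by simpa using hpn
        have key : ∀ m, n + 1 ≤ m →
            betV Q (seg p m) ≠ 1 / 3 ∧ betV Q (seg p m) ≠ 2 / 3 := by
          intro m hm
          induction m, hm using Nat.le_induction with
          | base =>
            rw [seg_succ, betV_concat, hpn]
            by_cases h3 : betV Q (seg p n) = 1 / 3
            · rw [h3]
              norm_num [stepV, hQ]
            · by_cases h4 : betV Q (seg p n) = 2 / 3
              · rw [h4]
                norm_num [stepV, hQ]
              · have : stepV (Q (seg p n)) (betV Q (seg p n)) false = betV Q (seg p n) := by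
                  unfold stepV
                  rw [if_neg (fun h => h3 h.2), if_neg (fun h => h4 h.2)]
                rw [this]
                exact ⟨h3, h4⟩
          | succ m hm ih =>
            rw [seg_succ, betV_concat]
            have : stepV (Q (seg p m)) (betV Q (seg p m)) (p m) = betV Q (seg p m) := by
              unfold stepV
              rw [if_neg (fun h => ih.1 h.2), if_neg (fun h => ih.2 h.2)]
            rw [this]
            exact ih
        refine ⟨n + 1, fun m hm => ?_⟩
        rw [seg_succ, betV_concat]
        unfold stepV
        rw [if_neg (fun h => (key m hm).1 h.2), if_neg (fun h => (key m hm).2 h.2)]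
      · push Not at h1
        obtain ⟨N, hN⟩ := h1
        refine ⟨N, fun n hn => ?_⟩
        rw [seg_succ, betV_concat]
        simp [stepV, hN n hn]
    obtain ⟨N, hN⟩ := hev
    have hc : ∀ n ≥ N, betV Q (seg p n) = betV Q (seg p N) := by
      intro n hn
      induction n, hn using Nat.le_induction with
      | base => rfl
      | succ n hn ih => rw [hN n hn, ih]
    have : Tendsto (fun n => betV Q (seg p n)) atTop (𝓝 (betV Q (seg p N))) := by
      refine tendsto_const_nhds.congr' ?_
      filter_upwards [eventually_ge_atTop N] with n hn
      exact (hc n hn).symm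
    exact this.cauchySeq

theorem betV_continuous {Z : Type*} [TopologicalSpace Z] (Q : Z → List Bool → Prop)
    (hQ : ∀ s, IsLocallyConstant (fun z => Q z s)) : Continuous (fun z => betV (Q z)) := by
  refine continuous_pi fun s => IsLocallyConstant.continuous ?_
  induction s using List.reverseRecOn with
  | nil => exact IsLocallyConstant.const _
  | append_singleton s b ih =>
    simp only [betV_concat]
    exact (hQ s).comp₂ ih (fun q v => stepV q v b)

/-! ### Gaps between ones: a continuous surjection from a G-delta set onto Baire space -/

/-- The gaps between consecutive ones. -/
noncomputable def gaps (y : ℕ → Bool) (n : ℕ) : ℕ :=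
  Nat.nth (fun k => y k = true) (n + 1) - Nat.nth (fun k => y k = true) n - 1

theorem nth_local (y : ℕ → Bool) (hy : (Set.ofPred fun k => y k = true).Infinite) (n : ℕ) :
    ∃ N, ∀ y' : ℕ → Bool, (∀ i < N, y' i = y i) →
      Nat.nth (fun k => y' k = true) n = Nat.nth (fun k => y k = true) n := by
  set M := Nat.nth (fun k => y k = true) n with hM
  refine ⟨M + 1, fun y' h => ?_⟩
  have h1 : Nat.count (fun k => y k = true) M = n := Nat.count_nth_of_infinite hy n
  have h2 : Nat.count (fun k => y' k = true) M = Nat.count (fun k => y k = true) M := by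
    rw [Nat.count_eq_card_filter_range, Nat.count_eq_card_filter_range]
    congr 1
    apply Finset.filter_congr
    intro i hi
    rw [h i (by have := Finset.mem_range.1 hi; omega)]
  have h3 : y' M = true := by
    rw [h M (by omega)]
    exact Nat.nth_mem_of_infinite hy n
  have h4 := Nat.nth_count (p := fun k => y' k = true) h3
  rw [h2, h1] at h4
  exact h4

theorem gaps_local (y : ℕ → Bool) (hy : (Set.ofPred fun k => y k = true).Infinite) (n : ℕ) :
    ∃ N, ∀ y' : ℕ → Bool, (∀ i < N, y' i = y i) → gaps y' n = gaps y n := by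
  obtain ⟨N1, h1⟩ := nth_local y hy n
  obtain ⟨N2, h2⟩ := nth_local y hy (n + 1)
  refine ⟨max N1 N2, fun y' h => ?_⟩
  unfold gaps
  rw [h1 y' fun i hi => h i (lt_of_lt_of_le hi (le_max_left _ _)),
    h2 y' fun i hi => h i (lt_of_lt_of_le hi (le_max_right _ _))]

theorem eventually_agree (y : ℕ → Bool) (N : ℕ) : ∀ᶠ y' in 𝓝 y, ∀ i < N, y' i = y i := by
  have : ∀ᶠ y' in 𝓝 y, ∀ i ∈ Finset.range N, y' i = y i := by
    rw [Filter.eventually_all_finset]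
    intro i _
    have hc : ContinuousAt (fun y' : ℕ → Bool => y' i) y := (continuous_apply i).continuousAt
    exact hc.eventually_mem (s := {y i}) (by simp [nhds_discrete])
  filter_upwards [this] with y' h i hi using h i (Finset.mem_range.2 hi)

theorem agree_of_eventually (y : ℕ → Bool) (P : (ℕ → Bool) → Prop) (h : ∀ᶠ y' in 𝓝 y, P y') :
    ∃ N, ∀ y' : ℕ → Bool, (∀ i < N, y' i = y i) → P y' := by
  by_contra hcon
  push Not at hcon
  choose u hu1 hu2 using hcon
  have ht : Tendsto u atTop (𝓝 y) := by
    rw [tendsto_pi_nhds]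
    intro i
    refine tendsto_const_nhds.congr' ?_
    filter_upwards [eventually_gt_atTop i] with n hn
    exact (hu1 n i hn).symm
  obtain ⟨n, hn⟩ := (ht.eventually h).exists
  exact hu2 n hn

theorem gaps_continuousAt (y : ℕ → Bool) (hy : (Set.ofPred fun k => y k = true).Infinite) :
    ContinuousAt gaps y := by
  rw [continuousAt_pi]
  intro n
  obtain ⟨N, hN⟩ := gaps_local y hy n
  refine tendsto_const_nhds.congr' ?_
  filter_upwards [eventually_agree y N] with y' h
  exact (hN y' h).symm

theorem gaps_surj (x : ℕ → ℕ) :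
    ∃ y : ℕ → Bool, (Set.ofPred fun k => y k = true).Infinite ∧ gaps y = x := by
  classical
  let σ : ℕ → ℕ := fun n => ∑ i ∈ Finset.range n, (x i + 1)
  have hσ1 : ∀ n, σ (n + 1) = σ n + (x n + 1) := fun n => Finset.sum_range_succ _ _
  have hσ : StrictMono σ := strictMono_nat_of_lt_succ fun n => by rw [hσ1]; omega
  let y : ℕ → Bool := fun k => decide (k ∈ Set.range σ)
  have hset : (Set.ofPred fun k => y k = true) = Set.range σ := by
    ext k
    simp [y]
  have hinf : (Set.ofPred fun k => y k = true).Infinite := by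
    rw [hset]
    exact Set.infinite_range_of_injective hσ.injective
  have hnth : ∀ n, Nat.nth (fun k => y k = true) n = σ n := by
    have hmono := Nat.nth_strictMono hinf
    have : Nat.nth (fun k => y k = true) = σ := by
      apply (StrictMono.range_inj hmono hσ).1
      rw [Nat.range_nth_of_infinite hinf, hset]
    exact fun n => congrFun this n
  refine ⟨y, hinf, ?_⟩
  funext n
  unfold gaps
  rw [hnth, hnth, hσ1]
  omega

/-! ### Reduction of analytic sets -/

/-- The betting condition associated with `φ`. -/
def betQ (φ : (ℕ → ℕ) → (ℕ → Bool) × (ℕ → Bool)) (z : (ℕ → Bool) × (ℕ → Bool))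
    (s : List Bool) : Prop :=
  ∃ m, s.length = 2 * m + 1 ∧ s.getD (2 * m) false = true ∧
    ∃ y : ℕ → Bool, (∀ i ≤ m, y i = s.getD (2 * i) false) ∧
      ∀ i < m, (φ (gaps y)).1 i = z.1 i ∧ (φ (gaps y)).2 i = z.2 i

theorem betQ_loc (φ : (ℕ → ℕ) → (ℕ → Bool) × (ℕ → Bool)) (s : List Bool) :
    IsLocallyConstant (fun z => betQ φ z s) := by
  rw [IsLocallyConstant.iff_eventually_eq]
  rintro ⟨a, b⟩
  rw [nhds_prod_eq]
  filter_upwards [(eventually_agree a s.length).prod_mk (eventually_agree b s.length)]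
  rintro ⟨a', b'⟩ ⟨h1, h2⟩
  simp only at h1 h2
  simp only [betQ, eq_iff_iff]
  constructor
  · rintro ⟨m, hm, hs, y, hy, hz⟩
    refine ⟨m, hm, hs, y, hy, fun i hi => ?_⟩
    rw [← h1 i (by omega), ← h2 i (by omega)]
    exact hz i hi
  · rintro ⟨m, hm, hs, y, hy, hz⟩
    refine ⟨m, hm, hs, y, hy, fun i hi => ?_⟩
    rw [h1 i (by omega), h2 i (by omega)]
    exact hz i hi

theorem betQ_spec (φ : (ℕ → ℕ) → (ℕ → Bool) × (ℕ → Bool)) (hφ : Continuous φ)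
    (z : (ℕ → Bool) × (ℕ → Bool)) :
    z ∈ Set.range φ ↔ ∃ p : ℕ → Bool, (∀ N, ∃ n ≥ N, betQ φ z (seg p n)) ∧
      ∀ n, betQ φ z (seg p n) → p n = true := by
  constructor
  · rintro ⟨x, rfl⟩
    obtain ⟨y, hy, rfl⟩ := gaps_surj x
    let p : ℕ → Bool := fun n => if n % 2 = 0 then y (n / 2) else true
    have heven : ∀ i, p (2 * i) = y i := by
      intro i
      simp [p]
    refine ⟨p, fun N => ?_, fun n hn => ?_⟩
    · obtain ⟨m, hm, hNm⟩ := hy.exists_gt N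
      refine ⟨2 * m + 1, by omega, m, seg_length _ _, ?_, y, ?_, fun i _ => ⟨rfl, rfl⟩⟩
      · rw [seg_getD _ _ _ (by omega), heven]
        exact hm
      · intro i hi
        rw [seg_getD _ _ _ (by omega), heven]
    · obtain ⟨m, hm, -⟩ := hn
      rw [seg_length] at hm
      subst hm
      simp [p]
  · rintro ⟨p, hp, -⟩
    let y : ℕ → Bool := fun i => p (2 * i)
    have key : ∀ N, ∃ m ≥ N, y m = true ∧ ∃ y' : ℕ → Bool, (∀ i ≤ m, y' i = y i) ∧
        ∀ i < m, (φ (gaps y')).1 i = z.1 i ∧ (φ (gaps y')).2 i = z.2 i := by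
      intro N
      obtain ⟨n, hn, m, hm, hs, y', hy', hz⟩ := hp (2 * N + 1)
      rw [seg_length] at hm
      subst hm
      refine ⟨m, by omega, ?_, y', fun i hi => ?_, hz⟩
      · rw [seg_getD _ _ _ (by omega)] at hs
        exact hs
      · rw [hy' i hi, seg_getD _ _ _ (by omega)]
    have hy : (Set.ofPred fun k => y k = true).Infinite := by
      apply Set.infinite_of_forall_exists_gt
      intro N
      obtain ⟨m, hm, h, -⟩ := key (N + 1)
      exact ⟨m, h, by omega⟩
    refine ⟨gaps y, ?_⟩
    have hc : ContinuousAt (fun y' => φ (gaps y')) y :=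
      hφ.continuousAt.comp (gaps_continuousAt y hy)
    have hi : ∀ i, (φ (gaps y)).1 i = z.1 i ∧ (φ (gaps y)).2 i = z.2 i := by
      intro i
      have h1 : ContinuousAt (fun y' => ((φ (gaps y')).1 i, (φ (gaps y')).2 i)) y := by
        have hc2 : Continuous (fun w : (ℕ → Bool) × (ℕ → Bool) => (w.1 i, w.2 i)) := by fun_prop
        exact hc2.continuousAt.comp hc
      have h2 : ∀ᶠ y' in 𝓝 y, ((φ (gaps y')).1 i, (φ (gaps y')).2 i) =
          ((φ (gaps y)).1 i, (φ (gaps y)).2 i) :=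
        h1.eventually_mem (s := {((φ (gaps y)).1 i, (φ (gaps y)).2 i)}) (by simp [nhds_discrete])
      obtain ⟨N, hN⟩ := agree_of_eventually y _ h2
      obtain ⟨m, hm, -, y', hy', hz⟩ := key (max N (i + 1))
      have hmN : N ≤ m := (le_max_left _ _).trans hm
      have hmi : i + 1 ≤ m := (le_max_right _ _).trans hm
      have h3 := hN y' fun j hj => hy' j (by omega)
      have h4 := hz i (by omega)
      rw [Prod.mk.injEq] at h3
      rw [← h3.1, ← h3.2]
      exact h4
    exact Prod.ext (funext fun i => (hi i).1) (funext fun i => (hi i).2)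

theorem analytic_reduction (E : Set ((ℕ → Bool) × (ℕ → Bool))) (hE : AnalyticSet E) :
    ∃ F : (ℕ → Bool) × (ℕ → Bool) → (List Bool → ℝ), Continuous F ∧
      ∀ z, F z ∈ Pconv ↔ z ∉ E := by
  rw [AnalyticSet] at hE
  rcases hE with rfl | ⟨φ, hφ, rfl⟩
  · refine ⟨fun _ => betV (fun _ => False), continuous_const, fun z => ?_⟩
    rw [betV_mem_Pconv_iff]
    simp
  · refine ⟨fun z => betV (betQ φ z), betV_continuous _ (betQ_loc φ), fun z => ?_⟩
    rw [betV_mem_Pconv_iff, betQ_spec φ hφ]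

/-- A continuous injection of Baire space into Cantor space. -/
def graphCode (x : ℕ → ℕ) (n : ℕ) : Bool := decide (x n.unpair.1 = n.unpair.2)

theorem graphCode_continuous : Continuous graphCode := by
  refine continuous_pi fun n => ?_
  have : Continuous (fun k : ℕ => decide (k = n.unpair.2)) := continuous_of_discreteTopology
  exact this.comp (continuous_apply n.unpair.1)

theorem graphCode_injective : Function.Injective graphCode := by
  intro x x' h
  funext n
  have := congrFun h (Nat.pair n (x n))
  simp [graphCode] at this
  exact this.symm

/-- `C₂` is `Π¹₂`-complete: its complement is the projection of
the coanalytic set `{(h,β) : h(β) ∈ 𝓟}` (so `C₂` is `Π¹₂`), and every `Π¹₂`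
subset `A` of `2^ω` (i.e. `Aᶜ` is the projection of a coanalytic subset of
`2^ω × ω^ω`) is the preimage of `C₂` under a continuous `g : 2^ω → P₂`. -/
theorem Ctwo_pi12_complete :
    (IsCoanalytic {p : Ptwo × (ℕ → Bool) | p.1 p.2 ∈ Pconv} ∧
      Ctwoᶜ = Prod.fst '' {p : Ptwo × (ℕ → Bool) | p.1 p.2 ∈ Pconv}) ∧
    ∀ A : Set (ℕ → Bool),
      (∃ D : Set ((ℕ → Bool) × (ℕ → ℕ)), IsCoanalytic D ∧ Aᶜ = Prod.fst '' D) →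
      ∃ g : (ℕ → Bool) → Ptwo, Continuous g ∧ A = g ⁻¹' Ctwo := by
  refine ⟨⟨coanalytic_part, ?_⟩, ?_⟩
  · ext h
    simp [Ctwo]
  · rintro A ⟨D, hD, hA⟩
    have hr : MeasurableSet (Set.range graphCode) :=
      measurableSet_range_of_continuous_injective graphCode_continuous graphCode_injective
    let E : Set ((ℕ → Bool) × (ℕ → Bool)) :=
      (Prod.snd ⁻¹' (Set.range graphCode)ᶜ) ∪ (Prod.map id graphCode) '' Dᶜ
    have hE : AnalyticSet E := by
      refine analytic_union (measurable_snd hr.compl).analyticSet ?_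
      exact AnalyticSet.image_of_continuous hD (continuous_id.prodMap graphCode_continuous)
    obtain ⟨F, hF, hFE⟩ := analytic_reduction E hE
    refine ⟨ContinuousMap.curry ⟨F, hF⟩, ContinuousMap.continuous _, ?_⟩
    have hcode : ∀ a x, (a, graphCode x) ∈ E ↔ (a, x) ∉ D := by
      intro a x
      constructor
      · rintro (h | ⟨⟨a', x'⟩, h1, h2⟩)
        · exact absurd ⟨x, rfl⟩ h
        · simp only [Prod.map_apply, id_eq, Prod.mk.injEq] at h2
          rw [← h2.1, ← graphCode_injective h2.2]
          exact h1
      · intro h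
        exact Or.inr ⟨(a, x), h, rfl⟩
    ext a
    have h1 : a ∈ A ↔ ∀ x, (a, x) ∉ D := by
      rw [← not_iff_not, ← Set.mem_compl_iff, hA]
      simp
    have h2 : a ∈ (ContinuousMap.curry ⟨F, hF⟩ : (ℕ → Bool) → Ptwo) ⁻¹' Ctwo ↔
        ∀ b, (a, b) ∈ E := by
      change (∀ b, F (a, b) ∉ Pconv) ↔ _
      simp only [hFE, not_not]
    rw [h1, h2]
    constructor
    · intro h b
      by_cases hb : b ∈ Set.range graphCode
      · obtain ⟨x, rfl⟩ := hb
        exact (hcode a x).2 (h x)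
      · exact Or.inl hb
    · intro h x
      exact (hcode a x).1 (h _)
end
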